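/- Let k ∈ (0,1). For every n ∈ ℕ, Kuznetsov's moment integral I_n^− has the absolutely convergent Eisenstein series expansion (I_n^− : ℂ) = (−1)^{n+1} · 2 · (2n+3)! · Σ_{(p,q) ∈ ℤ²} ((2q + p − 1)K + i p K')^{−(2n+4)}, where the complex numbers (2q+p−1)K + ipK' are nonzero for all (p,q) ∈ ℤ². -/

import Mathlib

/-!
Only `a = K > 0` and `b = K' > 0` matter. For `y > 0`, multiplying the Poisson kernel
`sinh y / (cosh y - cos x) = ∑_{m ∈ ℤ} exp (-|m| y + i m x)` by
`1 / sinh y = 2 ∑_{j ≥ 0} exp (-(2j+1) y)` gives (`hasSum_kernel`)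

  `1 / (2 (cosh y - cos x)) = ∑_{j ≥ 0, m ∈ ℤ} exp (-((2j + 1 + |m|) y - i m x))`.

With `y = b t`, `x = a t`, integration against `t ^ (2n+3)` term by term (`hasSum_cone`) turns this
into a sum of `(2n+3)! / (P b - i m a) ^ (2n+4)` over `P = 2j + 1 + |m|`, that is, over the lattice
points `m a + i P b` with `m + P` odd in the cone `P > |m|`; the interchange is justified by
`summable_cone`. The substitution `x = t²` (`integral_sqrt_subst`) identifies the two integrals in
`I_n^-` with such integrals, the second one having `a` and `b` exchanged and hence covering the cone
around the real axis. Since the coordinates of every lattice point have odd sum, no point lies on the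
diagonals, so these two cones and their negatives partition the lattice (`coneIndex_bijective`), and
opposite cones contribute equally because the exponent is even (`hasSum_lattice`). Absolute
convergence is automatic, as unconditional summability in `ℂ` is absolute.
-/

open MeasureTheory Real

/-- The complete elliptic integral of the first kind `K(k)`. -/
noncomputable def ellipticK (k : ℝ) : ℝ :=
  ∫ θ in (0 : ℝ)..(π / 2), (1 - k ^ 2 * Real.sin θ ^ 2) ^ (-(1 / 2) : ℝ)

/-- Kuznetsov's moment integral `I_n^+`, realizing
`(1/2)∫_ℝ x^n dx/(cos(√x K) + cosh(√x K'))` with `√x = i√(−x)` for `x < 0`. -/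
noncomputable def Iplus (k : ℝ) (n : ℕ) : ℝ :=
  (1 / 2) * (∫ x in Set.Ioi (0 : ℝ), x ^ n /
      (Real.cos (ellipticK k * Real.sqrt x) +
        Real.cosh (ellipticK (Real.sqrt (1 - k ^ 2)) * Real.sqrt x)))
  + ((-1 : ℝ) ^ n / 2) * (∫ x in Set.Ioi (0 : ℝ), x ^ n /
      (Real.cosh (ellipticK k * Real.sqrt x) +
        Real.cos (ellipticK (Real.sqrt (1 - k ^ 2)) * Real.sqrt x)))

/-- Kuznetsov's moment integral `I_n^−`, realizing
`∫_ℝ x^{n+1} dx/(cos(√x K) − cosh(√x K'))` with `√x = i√(−x)` for `x < 0`. -/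
noncomputable def Iminus (k : ℝ) (n : ℕ) : ℝ :=
  (∫ x in Set.Ioi (0 : ℝ), x ^ (n + 1) /
      (Real.cos (ellipticK k * Real.sqrt x) -
        Real.cosh (ellipticK (Real.sqrt (1 - k ^ 2)) * Real.sqrt x)))
  + (-1 : ℝ) ^ (n + 1) * (∫ x in Set.Ioi (0 : ℝ), x ^ (n + 1) /
      (Real.cosh (ellipticK k * Real.sqrt x) -
        Real.cos (ellipticK (Real.sqrt (1 - k ^ 2)) * Real.sqrt x)))

/-! ### Positivity of the elliptic integral -/

lemma ellipticK_pos {k : ℝ} (hk : k ^ 2 < 1) : 0 < ellipticK k := by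
  have hpos : ∀ θ : ℝ, 0 < 1 - k ^ 2 * Real.sin θ ^ 2 := fun θ => by
    nlinarith [sq_nonneg k, Real.sin_sq_le_one θ, sq_nonneg (Real.sin θ)]
  refine intervalIntegral.intervalIntegral_pos_of_pos (Continuous.intervalIntegrable ?_ _ _)
    (fun θ => Real.rpow_pos_of_pos (hpos θ) _) (by positivity)
  exact Continuous.rpow_const (by fun_prop) fun θ => Or.inl (hpos θ).ne'

/-! ### Laplace transforms of monomials -/

lemma integrableOn_pow_mul_exp (s : ℕ) {c : ℝ} (hc : 0 < c) :
    IntegrableOn (fun t : ℝ => t ^ s * Real.exp (-(c * t))) (Set.Ioi 0) := by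
  have h := integrableOn_rpow_mul_exp_neg_mul_rpow (p := 1) (s := s) (b := c)
    (by linarith [(Nat.cast_nonneg s : (0 : ℝ) ≤ s)]) one_pos hc
  simpa using h

lemma integral_pow_mul_exp (s : ℕ) {c : ℝ} (hc : 0 < c) :
    ∫ t in Set.Ioi (0 : ℝ), t ^ s * Real.exp (-(c * t)) = s.factorial / c ^ (s + 1) := by
  have h := Real.integral_rpow_mul_exp_neg_mul_Ioi (a := s + 1) (r := c) (by positivity) hc
  simp only [add_sub_cancel_right, Real.rpow_natCast, Real.Gamma_nat_eq_factorial] at h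
  rw [h, ← Nat.cast_succ, Real.rpow_natCast, one_div, inv_pow]
  field_simp

lemma norm_pow_mul_cexp (s : ℕ) (r : ℂ) {t : ℝ} (ht : 0 < t) :
    ‖(t : ℂ) ^ s * Complex.exp (-(r * t))‖ = t ^ s * Real.exp (-(r.re * t)) := by
  simp [Complex.norm_exp, abs_of_pos ht]

lemma integrableOn_pow_mul_cexp (s : ℕ) {r : ℂ} (hr : 0 < r.re) :
    IntegrableOn (fun t : ℝ => (t : ℂ) ^ s * Complex.exp (-(r * t))) (Set.Ioi 0) := by
  refine Integrable.mono' (integrableOn_pow_mul_exp s hr)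
    (Continuous.aestronglyMeasurable (by fun_prop)) ?_
  filter_upwards [ae_restrict_mem measurableSet_Ioi] with t ht
  exact (norm_pow_mul_cexp s r ht).le

/-- The Laplace transform of a monomial at a complex point of the right half-plane; Mathlib's
Gamma integral covers only real exponents of decay. -/
lemma integral_pow_mul_cexp (s : ℕ) {r : ℂ} (hr : 0 < r.re) :
    ∫ t in Set.Ioi (0 : ℝ), (t : ℂ) ^ s * Complex.exp (-(r * t)) =
      s.factorial / r ^ (s + 1) := by
  have hr0 : r ≠ 0 := fun h => by simp [h] at hr
  induction s with
  | zero =>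
    have := integral_exp_mul_complex_Ioi (a := -r) (by simpa using hr) 0
    simp only [neg_mul] at this
    simp [this]
  | succ s ih =>
    have hlim : Filter.Tendsto (fun t : ℝ => (t : ℂ) ^ (s + 1) * Complex.exp (-(r * t)))
        Filter.atTop (nhds 0) := by
      rw [tendsto_zero_iff_norm_tendsto_zero]
      refine (tendsto_rpow_mul_exp_neg_mul_atTop_nhds_zero (s + 1 : ℕ) r.re hr).congr' ?_
      filter_upwards [Filter.eventually_gt_atTop 0] with t ht
      rw [norm_pow_mul_cexp _ _ ht, Real.rpow_natCast, neg_mul]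
    have hder : ∀ t ∈ Set.Ici (0 : ℝ),
        HasDerivAt (fun t : ℝ => (t : ℂ) ^ (s + 1) * Complex.exp (-(r * t)))
          ((s + 1 : ℂ) * ((t : ℂ) ^ s * Complex.exp (-(r * t))) -
            r * ((t : ℂ) ^ (s + 1) * Complex.exp (-(r * t)))) t := by
      intro t _
      have h1 : HasDerivAt (fun z : ℂ => z ^ (s + 1) * Complex.exp (-(r * z)))
          ((s + 1 : ℂ) * ((t : ℂ) ^ s * Complex.exp (-(r * t))) -
            r * ((t : ℂ) ^ (s + 1) * Complex.exp (-(r * t)))) (t : ℂ) := by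
        convert! (hasDerivAt_pow (s + 1) (t : ℂ)).mul
          (((hasDerivAt_id (t : ℂ)).const_mul r).neg.cexp) using 1
        simp only [id, Nat.add_sub_cancel, Pi.neg_apply]
        push_cast
        ring
      exact h1.comp_ofReal
    have i1 := (integrableOn_pow_mul_cexp s hr).const_mul (s + 1 : ℂ)
    have i2 := (integrableOn_pow_mul_cexp (s + 1) hr).const_mul r
    have h := integral_Ioi_of_hasDerivAt_of_tendsto' hder (i1.sub i2) hlim
    rw [integral_sub i1 i2, integral_const_mul, integral_const_mul, ih] at h
    simp only [Complex.ofReal_zero, zero_pow (Nat.succ_ne_zero s), zero_mul, sub_zero] at h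
    rw [Nat.factorial_succ, eq_div_iff (pow_ne_zero _ hr0)]
    have h' := (sub_eq_zero.mp h).symm
    rw [mul_div_assoc', eq_div_iff (pow_ne_zero _ hr0)] at h'
    push_cast
    rw [← h']
    ring

/-! ### Exponential expansion of the kernel -/

lemma one_sub_ne_zero_of_norm_lt_one {u : ℂ} (hu : ‖u‖ < 1) : 1 - u ≠ 0 := fun h => by
  rw [← sub_eq_zero.mp h] at hu; simp at hu

/-- The Poisson kernel as a two-sided geometric series. -/
lemma hasSum_poisson (x : ℝ) {y : ℝ} (hy : 0 < y) :
    HasSum (fun m : ℤ => Complex.exp (-((|(m : ℝ)| : ℝ) * y - Complex.I * m * x : ℂ)))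
      ((1 - Complex.exp (-y + Complex.I * x))⁻¹ +
        Complex.exp (-y - Complex.I * x) * (1 - Complex.exp (-y - Complex.I * x))⁻¹) := by
  have hzn : ‖Complex.exp (-y + Complex.I * x)‖ < 1 := by
    rw [Complex.norm_exp]; simpa using hy
  have hwn : ‖Complex.exp (-y - Complex.I * x)‖ < 1 := by
    rw [Complex.norm_exp]; simpa using hy
  refine HasSum.of_nat_of_neg_add_one ?_ ?_
  · refine (hasSum_geometric_of_norm_lt_one hzn).congr_fun fun n => ?_
    rw [← Complex.exp_nat_mul]
    congr 1
    push_cast [Nat.abs_cast]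
    ring
  · refine ((hasSum_geometric_of_norm_lt_one hwn).mul_left _).congr_fun fun n => ?_
    rw [← Complex.exp_nat_mul, ← Complex.exp_add]
    have : |((-((n : ℤ) + 1) : ℤ) : ℝ)| = n + 1 := by
      push_cast
      rw [abs_neg, abs_of_pos (by positivity)]
    congr 1
    rw [this]
    push_cast
    ring

/-- With `r = exp (-y)` and `z, w = exp (-y ± i x)`, both sides equal `r / ((1 - z) (1 - w))`, because
`z w = r²`. -/
lemma kernel_value (x : ℝ) {y : ℝ} (hy : 0 < y) :
    ((1 / (2 * (Real.cosh y - Real.cos x)) : ℝ) : ℂ) =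
      Complex.exp (-y) * (1 - Complex.exp (-y) ^ 2)⁻¹ *
      ((1 - Complex.exp (-y + Complex.I * x))⁻¹ +
        Complex.exp (-y - Complex.I * x) * (1 - Complex.exp (-y - Complex.I * x))⁻¹) := by
  obtain ⟨r, hr⟩ : ∃ r : ℂ, r = Complex.exp (-y) := ⟨_, rfl⟩
  obtain ⟨z, hz⟩ : ∃ z : ℂ, z = Complex.exp (-y + Complex.I * x) := ⟨_, rfl⟩
  obtain ⟨w, hw⟩ : ∃ w : ℂ, w = Complex.exp (-y - Complex.I * x) := ⟨_, rfl⟩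
  have hrn : ‖r ^ 2‖ < 1 := by
    rw [norm_pow]
    refine pow_lt_one₀ (norm_nonneg _) ?_ two_ne_zero
    rw [hr, Complex.norm_exp]; simpa using hy
  have hz1 : 1 - z ≠ 0 := one_sub_ne_zero_of_norm_lt_one <| by
    rw [hz, Complex.norm_exp]; simpa using hy
  have hw1 : 1 - w ≠ 0 := one_sub_ne_zero_of_norm_lt_one <| by
    rw [hw, Complex.norm_exp]; simpa using hy
  have hr1 := one_sub_ne_zero_of_norm_lt_one hrn
  have hzw : z * w = r ^ 2 := by
    rw [hz, hw, hr, ← Complex.exp_add, ← Complex.exp_nat_mul]; congr 1; push_cast; ring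
  have hsum : r * (2 * Complex.cos x) = z + w := by
    rw [Complex.two_cos, hz, hw, hr, mul_add, ← Complex.exp_add, ← Complex.exp_add]
    congr 2 <;> ring
  have hch : r * (2 * Complex.cosh y) = 1 + r ^ 2 := by
    rw [Complex.two_cosh, hr, mul_add, ← Complex.exp_add, ← Complex.exp_add, neg_add_cancel,
      Complex.exp_zero, sq, ← Complex.exp_add]
  have hr0 : r ≠ 0 := hr ▸ Complex.exp_ne_zero _
  rw [← hr, ← hz, ← hw]
  have hden : r * (2 * (Complex.cosh y - Complex.cos x)) = (1 - z) * (1 - w) := by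
    linear_combination hch - hsum - hzw
  have hd0 : 2 * (Complex.cosh y - Complex.cos x) ≠ 0 := fun h => by
    rw [h, mul_zero] at hden; exact mul_ne_zero hz1 hw1 hden.symm
  have e : (1 - z)⁻¹ + w * (1 - w)⁻¹ = (1 - r ^ 2) / ((1 - z) * (1 - w)) := by
    rw [← hzw]; field_simp; ring
  rw [e, ← hden]
  push_cast
  generalize 2 * (Complex.cosh y - Complex.cos x) = D at hd0
  field_simp

/-- The Poisson kernel `sinh y / (cosh y - cos x)` times `1 / sinh y = 2 ∑ exp (-(2j+1)y)`. -/
lemma hasSum_kernel (x : ℝ) {y : ℝ} (hy : 0 < y) :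
    HasSum (fun jm : ℕ × ℤ =>
      Complex.exp (-((2 * jm.1 + 1 + |(jm.2 : ℝ)| : ℝ) * y - Complex.I * jm.2 * x : ℂ)))
      ((1 / (2 * (Real.cosh y - Real.cos x)) : ℝ) : ℂ) := by
  have hrn : ‖Complex.exp (-y) ^ 2‖ < 1 := by
    rw [norm_pow]
    refine pow_lt_one₀ (norm_nonneg _) ?_ two_ne_zero
    rw [Complex.norm_exp]; simpa using hy
  have h1 := (hasSum_geometric_of_norm_lt_one hrn).mul_left (Complex.exp (-y))
  have h2 := hasSum_poisson x hy
  have n1 := h1.summable.norm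
  have n2 := h2.summable.norm
  have h3 := h1.mul h2 (by apply summable_mul_of_summable_norm n1 n2)
  rw [kernel_value x hy]
  refine h3.congr_fun fun jm => ?_
  rw [← Complex.exp_nat_mul, ← Complex.exp_nat_mul, ← Complex.exp_add, ← Complex.exp_add]
  congr 1
  push_cast
  ring

/-! ### Termwise integration -/

/-- Comparison with the product of two convergent `p`-series with `p = 2`. -/
lemma summable_cone {s : ℕ} (hs : 3 ≤ s) {b : ℝ} (hb : 0 < b) :
    Summable fun jm : ℕ × ℤ =>
      (s.factorial : ℝ) / ((2 * jm.1 + 1 + |(jm.2 : ℝ)|) * b) ^ (s + 1) := by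
  have h1 : Summable fun j : ℕ => 1 / ((j : ℝ) + 1) ^ 2 := by
    exact_mod_cast (summable_nat_add_iff 1).mpr (Real.summable_one_div_nat_pow.mpr one_lt_two)
  have h2 : Summable fun m : ℤ => 1 / (|(m : ℝ)| + 1) ^ 2 := by
    refine Summable.of_nat_of_neg ?_ ?_ <;> simpa using h1
  have h3 := (h1.mul_of_nonneg h2 (fun _ => by positivity) (fun _ => by positivity)).mul_left
    (s.factorial / b ^ (s + 1))
  refine h3.of_nonneg_of_le (fun _ => by positivity) fun ⟨j, m⟩ => ?_
  have hm := abs_nonneg (m : ℝ)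
  have hj : (0 : ℝ) ≤ j := Nat.cast_nonneg j
  have key : ((j : ℝ) + 1) ^ 2 * (|(m : ℝ)| + 1) ^ 2 ≤ (2 * j + 1 + |(m : ℝ)|) ^ (s + 1) := by
    calc ((j : ℝ) + 1) ^ 2 * (|(m : ℝ)| + 1) ^ 2
        ≤ (2 * j + 1 + |(m : ℝ)|) ^ 2 * (2 * j + 1 + |(m : ℝ)|) ^ 2 := by
          have e1 : (j : ℝ) + 1 ≤ 2 * j + 1 + |(m : ℝ)| := by linarith
          have e2 : |(m : ℝ)| + 1 ≤ 2 * j + 1 + |(m : ℝ)| := by linarith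
          exact mul_le_mul (pow_le_pow_left₀ (by positivity) e1 2)
            (pow_le_pow_left₀ (by positivity) e2 2) (by positivity) (by positivity)
      _ = (2 * j + 1 + |(m : ℝ)|) ^ 4 := by ring
      _ ≤ _ := pow_le_pow_right₀ (by linarith) (by omega)
  rw [mul_pow, mul_comm (_ ^ (s + 1)), ← div_div, div_mul_div_comm, one_mul, mul_one_div]
  gcongr

/-- The integral of `t ^ s / (2 (cosh (b t) - cos (a t)))` as a lattice sum over one cone. -/
lemma hasSum_cone {s : ℕ} (hs : 3 ≤ s) (a : ℝ) {b : ℝ} (hb : 0 < b) :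
    HasSum (fun jm : ℕ × ℤ => (s.factorial : ℂ) /
      (((2 * jm.1 + 1 + |(jm.2 : ℝ)| : ℝ) : ℂ) * b - Complex.I * jm.2 * a) ^ (s + 1))
      ((∫ t in Set.Ioi (0 : ℝ), t ^ s / (2 * (Real.cosh (b * t) - Real.cos (a * t))) : ℝ) : ℂ) := by
  set R : ℕ × ℤ → ℂ := fun jm => ((2 * jm.1 + 1 + |(jm.2 : ℝ)| : ℝ) : ℂ) * b - Complex.I * jm.2 * a
    with hR
  have hre : ∀ jm, (R jm).re = (2 * jm.1 + 1 + |(jm.2 : ℝ)|) * b := fun jm => by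
    rw [hR]; simp
  have hpos : ∀ jm, 0 < (R jm).re := fun jm => by rw [hre]; positivity
  have h := hasSum_integral_of_summable_integral_norm
    (μ := volume.restrict (Set.Ioi (0 : ℝ)))
    (F := fun jm (t : ℝ) => (t : ℂ) ^ s * Complex.exp (-(R jm * t)))
    (fun jm => integrableOn_pow_mul_cexp s (hpos jm)) (by
      refine (summable_cone hs hb).congr fun jm => ?_
      rw [setIntegral_congr_fun measurableSet_Ioi (fun t ht => norm_pow_mul_cexp s (R jm) ht),
        integral_pow_mul_exp s (hpos jm), hre])
  simp only [fun jm => integral_pow_mul_cexp s (hpos jm)] at h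
  convert! h using 1
  rw [← integral_complex_ofReal]
  refine setIntegral_congr_fun measurableSet_Ioi fun t ht => ?_
  have hk := (hasSum_kernel (a * t) (mul_pos hb ht)).mul_left ((t : ℂ) ^ s)
  have hk' : HasSum (fun jm => (t : ℂ) ^ s * Complex.exp (-(R jm * t))) _ :=
    hk.congr_fun fun jm => by
      congr 3
      simp only [hR]
      push_cast
      ring
  rw [hk'.tsum_eq]
  push_cast
  ring

/-- Substitution `x = t²`. -/
lemma integral_sqrt_subst (n : ℕ) (g : ℝ → ℝ) :
    ∫ x in Set.Ioi (0 : ℝ), x ^ (n + 1) / g (√x) =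
      4 * ∫ t in Set.Ioi (0 : ℝ), t ^ (2 * n + 3) / (2 * g t) := by
  rw [← integral_comp_rpow_Ioi_of_pos (p := 2) two_pos, ← integral_const_mul]
  refine setIntegral_congr_fun measurableSet_Ioi fun t ht => ?_
  have ht' : (0 : ℝ) < t := ht
  simp only [Real.rpow_two, Real.sqrt_sq ht'.le, smul_eq_mul]
  norm_num
  ring

/-! ### Assembling the lattice from four cones -/

/-- The pairs `(p, q)` index the points `M a + i p b` with `M = 2q + p - 1`, so `M + p` is odd and
`|M| ≠ |p|`.  The four summands enumerate the open cones `p > |M|`, `p < -|M|`, `M > |p|` and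
`M < -|p|`, in this order: in each, the dominant coordinate is `±(2j + 1 + |m|)` and the other one
is `±m`. -/
def coneIndex : (ℕ × ℤ ⊕ ℕ × ℤ) ⊕ (ℕ × ℤ ⊕ ℕ × ℤ) → ℤ × ℤ
  | .inl (.inl (j, m)) => (2 * j + 1 + m.natAbs, min m 0 - j)
  | .inl (.inr (j, m)) => (-(2 * j + 1 + m.natAbs), j + 1 - min m 0)
  | .inr (.inl (j, m)) => (-m, j + 1 + max m 0)
  | .inr (.inr (j, m)) => (m, -j - max m 0)

lemma coneIndex_bijective : Function.Bijective coneIndex := by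
  constructor
  · rintro ((⟨j, m⟩ | ⟨j, m⟩) | (⟨j, m⟩ | ⟨j, m⟩)) ((⟨j', m'⟩ | ⟨j', m'⟩) | (⟨j', m'⟩ | ⟨j', m'⟩)) h <;>
      simp only [coneIndex, Prod.mk.injEq] at h <;>
      simp only [Sum.inl.injEq, Sum.inr.injEq, Prod.mk.injEq, reduceCtorEq] <;> omega
  · rintro ⟨p, q⟩
    obtain ⟨M, hM⟩ : ∃ M : ℤ, M = 2 * q + p - 1 := ⟨_, rfl⟩
    by_cases h1 : |M| < |p|
    · rcases lt_or_ge 0 p with hp | hp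
      · refine ⟨.inl (.inl (((p - 1 - |M|) / 2).toNat, M)), ?_⟩
        simp only [coneIndex, Prod.mk.injEq]
        rw [abs_of_pos hp] at h1
        grind
      · refine ⟨.inl (.inr (((-p - 1 - |M|) / 2).toNat, -M)), ?_⟩
        simp only [coneIndex, Prod.mk.injEq]
        grind
    · rcases lt_or_ge 0 M with hp | hp
      · refine ⟨.inr (.inl (((M - 1 - |p|) / 2).toNat, -p)), ?_⟩
        simp only [coneIndex, Prod.mk.injEq]
        grind
      · refine ⟨.inr (.inr (((-M - 1 - |p|) / 2).toNat, p)), ?_⟩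
        simp only [coneIndex, Prod.mk.injEq]
        grind

lemma abs_cast_complex (m : ℤ) : ((|m| : ℤ) : ℂ) = ((|(m : ℝ)| : ℝ) : ℂ) := by
  rw [← Int.cast_abs, Complex.ofReal_intCast]

lemma two_mul_min_cast (m : ℤ) : 2 * ((min m 0 : ℤ) : ℂ) = m - ((|(m : ℝ)| : ℝ) : ℂ) := by
  rw [← abs_cast_complex]
  exact_mod_cast (by grind : 2 * min m 0 = m - |m|)

lemma two_mul_max_cast (m : ℤ) : 2 * ((max m 0 : ℤ) : ℂ) = m + ((|(m : ℝ)| : ℝ) : ℂ) := by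
  rw [← abs_cast_complex]
  exact_mod_cast (by grind : 2 * max m 0 = m + |m|)

/-- The lattice sum is assembled from the four cones; opposite cones contribute equally because
the exponent is even, and a cone around the imaginary axis carries the factor
`I ^ (2n + 4) = (-1) ^ n`. -/
lemma hasSum_lattice (n : ℕ) {a b : ℝ} (ha : 0 < a) (hb : 0 < b) :
    HasSum (fun pq : ℤ × ℤ =>
      ((((2 * pq.2 + pq.1 - 1 : ℤ) : ℂ) * (a : ℂ) +
            Complex.I * (pq.1 : ℂ) * (b : ℂ)) ^ (2 * n + 4))⁻¹)
      (2 * ((-1 : ℂ) ^ n * ((∫ t in Set.Ioi (0 : ℝ),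
          t ^ (2 * n + 3) / (2 * (Real.cosh (b * t) - Real.cos (a * t))) : ℝ) : ℂ) +
        ((∫ t in Set.Ioi (0 : ℝ),
          t ^ (2 * n + 3) / (2 * (Real.cosh (a * t) - Real.cos (b * t))) : ℝ) : ℂ)) /
        ((2 * n + 3).factorial : ℂ)) := by
  have hf : ((2 * n + 3).factorial : ℂ) ≠ 0 := by exact_mod_cast Nat.factorial_ne_zero _
  have hA := ((hasSum_cone (s := 2 * n + 3) (by omega) a hb).mul_left
    ((-1 : ℂ) ^ n / ((2 * n + 3).factorial : ℂ)))
  have hB := ((hasSum_cone (s := 2 * n + 3) (by omega) b ha).mul_left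
    (1 / ((2 * n + 3).factorial : ℂ)))
  have hI : Complex.I ^ (2 * n + 4) = (-1 : ℂ) ^ n := by
    rw [pow_add, pow_mul, Complex.I_sq]; simp
  have hev : Even (2 * n + 4) := ⟨n + 2, by ring⟩
  have hinv : ((-1 : ℂ) ^ n)⁻¹ = (-1) ^ n := by rw [← inv_pow]; norm_num
  -- `eA` and `eB` put the summands of the cones around the imaginary and the real axis into the form
  -- of the lattice sum.
  have eA : ∀ R : ℂ, (-1 : ℂ) ^ n / ((2 * n + 3).factorial : ℂ) *
      (((2 * n + 3).factorial : ℂ) / R ^ (2 * n + 3 + 1)) = ((Complex.I * R) ^ (2 * n + 4))⁻¹ := by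
    intro R
    rw [mul_pow, hI, mul_inv, hinv]
    field_simp
  have eB : ∀ R : ℂ, 1 / ((2 * n + 3).factorial : ℂ) *
      (((2 * n + 3).factorial : ℂ) / R ^ (2 * n + 3 + 1)) = (R ^ (2 * n + 4))⁻¹ := by
    intro R
    field_simp
  simp only [eA] at hA
  simp only [eB] at hB
  rw [← (Equiv.ofBijective _ coneIndex_bijective).hasSum_iff]
  have key := ((HasSum.sum (f := (fun pq : ℤ × ℤ =>
      ((((2 * pq.2 + pq.1 - 1 : ℤ) : ℂ) * (a : ℂ) +
            Complex.I * (pq.1 : ℂ) * (b : ℂ)) ^ (2 * n + 4))⁻¹) ∘ coneIndex ∘ Sum.inl)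
    (hA.congr_fun ?_) (hA.congr_fun ?_))).sum (f := (fun pq : ℤ × ℤ =>
      ((((2 * pq.2 + pq.1 - 1 : ℤ) : ℂ) * (a : ℂ) +
            Complex.I * (pq.1 : ℂ) * (b : ℂ)) ^ (2 * n + 4))⁻¹) ∘ coneIndex)
    (HasSum.sum (hB.congr_fun ?_) (hB.congr_fun ?_))
  · convert! key using 1
    generalize (∫ t in Set.Ioi (0 : ℝ),
      t ^ (2 * n + 3) / (2 * (Real.cosh (b * t) - Real.cos (a * t)))) = J₁
    generalize (∫ t in Set.Ioi (0 : ℝ),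
      t ^ (2 * n + 3) / (2 * (Real.cosh (a * t) - Real.cos (b * t)))) = J₂
    field_simp
    ring
  · rintro ⟨j, m⟩
    simp only [Function.comp, coneIndex]
    congr 2
    push_cast
    rw [abs_cast_complex]
    linear_combination (a : ℂ) * (two_mul_min_cast m) + (m : ℂ) * a * Complex.I_sq
  · rintro ⟨j, m⟩
    simp only [Function.comp, coneIndex]
    rw [← hev.neg_pow]
    congr 2
    push_cast
    rw [abs_cast_complex]
    linear_combination (a : ℂ) * (two_mul_min_cast m) + (m : ℂ) * a * Complex.I_sq
  · rintro ⟨j, m⟩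
    simp only [Function.comp, coneIndex]
    congr 2
    push_cast
    linear_combination (a : ℂ) * (two_mul_max_cast m)
  · rintro ⟨j, m⟩
    simp only [Function.comp, coneIndex]
    rw [← hev.neg_pow]
    congr 2
    push_cast
    linear_combination (a : ℂ) * (two_mul_max_cast m)

theorem Iminus_eisenstein_series (k : ℝ) (hk : k ∈ Set.Ioo (0 : ℝ) 1) (n : ℕ) :
    (∀ pq : ℤ × ℤ,
      ((2 * pq.2 + pq.1 - 1 : ℤ) : ℂ) * (ellipticK k : ℂ) +
        Complex.I * (pq.1 : ℂ) * (ellipticK (Real.sqrt (1 - k ^ 2)) : ℂ) ≠ 0) ∧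
    Summable (fun pq : ℤ × ℤ =>
      ‖((((2 * pq.2 + pq.1 - 1 : ℤ) : ℂ) * (ellipticK k : ℂ) +
          Complex.I * (pq.1 : ℂ) * (ellipticK (Real.sqrt (1 - k ^ 2)) : ℂ)) ^ (2 * n + 4))⁻¹‖) ∧
    (Iminus k n : ℂ) =
      (-1 : ℂ) ^ (n + 1) * 2 * (Nat.factorial (2 * n + 3) : ℂ) *
        ∑' pq : ℤ × ℤ,
          ((((2 * pq.2 + pq.1 - 1 : ℤ) : ℂ) * (ellipticK k : ℂ) +
            Complex.I * (pq.1 : ℂ) * (ellipticK (Real.sqrt (1 - k ^ 2)) : ℂ)) ^ (2 * n + 4))⁻¹ := by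
  obtain ⟨hk0, hk1⟩ := hk
  have ha : 0 < ellipticK k := ellipticK_pos (by nlinarith)
  have hb : 0 < ellipticK (Real.sqrt (1 - k ^ 2)) := ellipticK_pos (by
    rw [Real.sq_sqrt (by nlinarith)]
    nlinarith)
  unfold Iminus
  generalize ellipticK k = a at *
  generalize ellipticK (Real.sqrt (1 - k ^ 2)) = b at *
  have hsum := hasSum_lattice n ha hb
  refine ⟨fun ⟨p, q⟩ h => ?_, hsum.summable.norm, ?_⟩
  · have him := congrArg Complex.im h
    have hre := congrArg Complex.re h
    simp [hb.ne'] at him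
    subst him
    simp [ha.ne'] at hre
    have : (2 * q - 1 : ℤ) = 0 := by
      have : ((2 * q - 1 : ℤ) : ℝ) = 0 := by push_cast; exact hre
      exact_mod_cast this
    omega
  · rw [hsum.tsum_eq, integral_sqrt_subst n (fun t => Real.cos (a * t) - Real.cosh (b * t)),
      integral_sqrt_subst n (fun t => Real.cosh (a * t) - Real.cos (b * t))]
    have hneg : (∫ t in Set.Ioi (0 : ℝ),
          t ^ (2 * n + 3) / (2 * (Real.cos (a * t) - Real.cosh (b * t)))) =
        -∫ t in Set.Ioi (0 : ℝ),
          t ^ (2 * n + 3) / (2 * (Real.cosh (b * t) - Real.cos (a * t))) := by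
      rw [← integral_neg]
      congr 1 with t
      rw [← div_neg, ← mul_neg, neg_sub]
    rw [hneg]
    have hf : ((2 * n + 3).factorial : ℂ) ≠ 0 := by exact_mod_cast Nat.factorial_ne_zero _
    have hsq : (-1 : ℂ) ^ n * (-1) ^ n = 1 := by rw [← mul_pow]; norm_num
    generalize (∫ t in Set.Ioi (0 : ℝ),
      t ^ (2 * n + 3) / (2 * (Real.cosh (b * t) - Real.cos (a * t)))) = J₁
    generalize (∫ t in Set.Ioi (0 : ℝ),
      t ^ (2 * n + 3) / (2 * (Real.cosh (a * t) - Real.cos (b * t)))) = J₂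
    push_cast
    rw [pow_succ]
    field_simp
    linear_combination (4 * (J₁ : ℂ)) * hsq
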